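/- arXiv:1405.3194 — 2 statements merged into one kernel-verified Lean document; each statement's English description precedes it below -/
import Mathlib

section
/- For every positive integer k, ∑_{n=1}^{2k} (-1)^n * cos(π n² / (4k)) = (-1 + (-1)^k + √(2k) * (-1)^k)/2. -/
open Finset Real

/-!
The sum is half the real part of the generalized quadratic Gauss sum
`∑ n mod 4k, exp (πi (n² + 4k n) / 4k)`, up to the two terms fixed by the reflection `n ↦ 4k - n`.
That Gauss sum is evaluated by reciprocity, which turns it into a sum with a single term.

Reciprocity is obtained from Poisson summation. Put the Gaussian weight `exp (-π s n²)` on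
`exp (πi (a n² + c n) / b)` and sum over all `n : ℤ`: the result is a Gaussian series with complex
parameter `s - ia/b`, and the Poisson transform of that is again a Gaussian-weighted series of
quadratic phases, now with the roles of `a` and `b` interchanged. As `s → 0`, either side is
governed by the mean value of its phase over one period.
-/

section Reciprocity

open Complex Filter Topology

lemma mul_cpow_of_re_pos {x y : ℂ} (hx : 0 < x.re) (hy : 0 ≤ y.re) (r : ℂ) :
    (x * y) ^ r = x ^ r * y ^ r := by
  rcases eq_or_ne y 0 with rfl | hy₀
  · rcases eq_or_ne r 0 with rfl | hr <;> simp [*]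
  have hx₀ : x ≠ 0 := by rintro rfl; simp at hx
  have hargx := abs_lt.1 (abs_arg_lt_pi_div_two_iff.2 (.inl hx))
  have hargy := abs_le.1 (abs_arg_le_pi_div_two_iff.2 hy)
  rw [cpow_def_of_ne_zero (mul_ne_zero hx₀ hy₀), cpow_def_of_ne_zero hx₀, cpow_def_of_ne_zero hy₀,
    Complex.log_mul hx₀ hy₀ ⟨by linarith, by linarith⟩, add_mul, Complex.exp_add]

lemma ofReal_mul_neg_I_cpow_half {r : ℝ} (hr : 0 < r) :
    ((r : ℂ) * -I) ^ (1 / 2 : ℂ) = √r * cexp (-(π / 4 * I)) := by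
  rw [mul_cpow_of_re_pos (by simpa using hr) (by simp),
    cpow_def_of_ne_zero (neg_ne_zero.2 I_ne_zero), log_neg_I, Real.sqrt_eq_rpow, ofReal_cpow hr.le]
  push_cast
  ring_nf

lemma re_pos_of_re_inv_pos {s : ℂ} (hs : 0 < s⁻¹.re) : 0 < s.re := by
  have hs₀ : s ≠ 0 := by rintro rfl; simp at hs
  rwa [inv_re, div_pos_iff_of_pos_right (normSq_pos.2 hs₀)] at hs

lemma tsum_int_eq_sum_range_tsum {E : Type*} [NormedAddCommGroup E] [CompleteSpace E]
    (N : ℕ) [NeZero N] {F : ℤ → E} (hF : Summable F) :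
    ∑' n, F n = ∑ m ∈ range N, ∑' j : ℤ, F (j * N + m) := by
  let e : Fin N × ℤ ≃ ℤ := ((Int.divModEquiv N).trans (Equiv.prodComm _ _)).symm
  rw [← e.tsum_eq F, Summable.tsum_prod (f := fun p ↦ F (e p)) (e.summable_iff.2 hF),
    tsum_fintype, ← Fin.sum_univ_eq_sum_range fun m ↦ ∑' j : ℤ, F (j * N + m)]
  rfl

lemma exists_norm_le_of_periodic {E : Type*} [SeminormedAddCommGroup E] {g : ℤ → E} {N : ℕ}
    [NeZero N] (hg : Function.Periodic g N) : ∃ C, ∀ n, ‖g n‖ ≤ C := by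
  obtain ⟨C, hC⟩ := ((Set.finite_Ico (0 : ℤ) N).image (‖g ·‖)).bddAbove
  refine ⟨C, fun n ↦ ?_⟩
  obtain ⟨m, hm, hnm⟩ := hg.exists_mem_Ico₀ (by exact_mod_cast NeZero.pos N) n
  exact hnm ▸ hC ⟨m, hm, rfl⟩

lemma summable_gaussian {s : ℂ} (hs : 0 < s.re) (x : ℂ) :
    Summable fun n : ℤ ↦ cexp (-π * s * (n + x) ^ 2) := by
  have h := (summable_jacobiTheta₂_term_iff (I * s * x) (I * s)).2 (by simpa using hs)
  refine (h.mul_left (cexp (-π * s * x ^ 2))).congr fun n ↦ ?_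
  rw [jacobiTheta₂_term, ← Complex.exp_add]
  congr 1
  linear_combination (2 * π * n * s * x + π * n ^ 2 * s) * I_mul_I

lemma tsum_gaussian_eq {s : ℂ} (hs : 0 < s.re) (x : ℂ) :
    ∑' n : ℤ, cexp (-π * s * (n + x) ^ 2) =
      1 / s ^ (1 / 2 : ℂ) * ∑' n : ℤ, cexp (-π * s⁻¹ * n ^ 2 + 2 * π * I * x * n) := by
  have hs₀ : s ≠ 0 := ne_zero_of_re_pos hs
  have poisson := Complex.tsum_exp_neg_quadratic hs (-(s * x))
  have hleft (n : ℤ) : cexp (-π * s * (n + x) ^ 2) =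
      cexp (-π * s * x ^ 2) * cexp (-π * s * n ^ 2 + 2 * π * -(s * x) * n) := by
    rw [← Complex.exp_add]
    ring_nf
  have hright (n : ℤ) : cexp (-π * s⁻¹ * n ^ 2 + 2 * π * I * x * n) =
      cexp (-π * s * x ^ 2) * cexp (-π / s * (n + I * -(s * x)) ^ 2) := by
    rw [← Complex.exp_add]
    congr 1
    field_simp
    linear_combination (s ^ 2 * x ^ 2) * I_mul_I
  simp_rw [hleft, hright, tsum_mul_left, poisson]
  ring

lemma tendsto_tsum_gaussian_mul_character {ι : Type*} {l : Filter ι} {w : ι → ℂ}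
    (hw : Tendsto (fun i ↦ (w i).re) l atTop) (x : ℝ) :
    Tendsto (fun i ↦ ∑' n : ℤ, cexp (-π * w i * n ^ 2 + 2 * π * I * x * n)) l (𝓝 1) := by
  have hnorm (i : ι) (n : ℤ) : ‖cexp (-π * w i * n ^ 2 + 2 * π * I * x * n)‖ =
      Real.exp (-π * (w i).re * n ^ 2) := by
    rw [Complex.norm_exp]
    congr 1
    simp [sq]
  have hbound : Summable fun n : ℤ ↦ Real.exp (-π * n ^ 2) := by
    refine (summable_gaussian (s := 1) (by simp) 0).norm.congr fun n ↦ ?_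
    rw [Complex.norm_exp]
    simp [sq]
  have hterm (n : ℤ) : Tendsto (fun i ↦ cexp (-π * w i * n ^ 2 + 2 * π * I * x * n)) l
      (𝓝 (if n = 0 then 1 else 0)) := by
    split_ifs with hn
    · simpa [hn] using tendsto_const_nhds
    · rw [tendsto_zero_iff_norm_tendsto_zero]
      simp_rw [hnorm]
      have hn2 : 0 < (n : ℝ) ^ 2 := by positivity
      refine Real.tendsto_exp_atBot.comp ?_
      exact (hw.const_mul_atTop_of_neg (neg_lt_zero.2 Real.pi_pos)).atBot_mul_const hn2
  rw [← tsum_ite_eq (0 : ℤ) fun _ ↦ (1 : ℂ)]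
  refine tendsto_tsum_of_dominated_convergence hbound hterm ?_
  filter_upwards [hw.eventually_ge_atTop 1] with i hi n
  rw [hnorm, Real.exp_le_exp, neg_mul, neg_mul, neg_mul, neg_le_neg_iff]
  gcongr
  exact le_mul_of_one_le_right Real.pi_nonneg hi

lemma tendsto_cpow_half_mul_tsum_gaussian {ι : Type*} {l : Filter ι} {s : ι → ℂ}
    (hs : Tendsto (fun i ↦ (s i)⁻¹.re) l atTop) (x : ℝ) :
    Tendsto (fun i ↦ s i ^ (1 / 2 : ℂ) * ∑' n : ℤ, cexp (-π * s i * (n + x) ^ 2)) l (𝓝 1) := by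
  refine (tendsto_tsum_gaussian_mul_character hs x).congr' ?_
  filter_upwards [hs.eventually_gt_atTop 0] with i hi
  have hre := re_pos_of_re_inv_pos hi
  have hcpow : s i ^ (1 / 2 : ℂ) ≠ 0 :=
    (cpow_ne_zero_iff_of_exponent_ne_zero (by simp)).2 (ne_zero_of_re_pos hre)
  rw [tsum_gaussian_eq hre, ← mul_assoc, mul_one_div_cancel hcpow, one_mul]

lemma tsum_periodic_mul_gaussian {N : ℕ} [NeZero N] {g : ℤ → ℂ} (hg : Function.Periodic g N)
    {s : ℂ} (hs : 0 < s.re) (x : ℂ) :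
    ∑' n : ℤ, g n * cexp (-π * s * (n + x) ^ 2) =
      ∑ m ∈ range N, g m * ∑' n : ℤ, cexp (-π * (N ^ 2 * s) * (n + (m + x) / N) ^ 2) := by
  have hN : (N : ℂ) ≠ 0 := NeZero.ne _
  obtain ⟨C, hC⟩ := exists_norm_le_of_periodic hg
  have hsum : Summable fun n : ℤ ↦ g n * cexp (-π * s * (n + x) ^ 2) := by
    refine .of_norm_bounded ((summable_gaussian hs x).norm.mul_left C) fun n ↦ ?_
    rw [norm_mul]
    gcongr
    exact hC n
  rw [tsum_int_eq_sum_range_tsum N hsum]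
  refine Finset.sum_congr rfl fun m _ ↦ ?_
  rw [← tsum_mul_left]
  refine tsum_congr fun j ↦ ?_
  rw [add_comm (j * (N : ℤ)), show g (m + j * N) = g m from hg.int_mul j m]
  congr 2
  push_cast
  field_simp
  ring

lemma tendsto_cpow_half_mul_tsum_periodic_mul_gaussian {ι : Type*} {l : Filter ι} {s : ι → ℂ}
    (hs : Tendsto (fun i ↦ (s i)⁻¹.re) l atTop) {N : ℕ} [NeZero N] {g : ℤ → ℂ}
    (hg : Function.Periodic g N) (x : ℝ) :
    Tendsto (fun i ↦ s i ^ (1 / 2 : ℂ) * ∑' n : ℤ, g n * cexp (-π * s i * (n + x) ^ 2)) l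
      (𝓝 ((∑ m ∈ range N, g m) / N)) := by
  have hN : (N : ℂ) ≠ 0 := NeZero.ne _
  have hNsq : (0 : ℝ) < ((N : ℝ) ^ 2)⁻¹ := by have := NeZero.pos N; positivity
  have hscaled : Tendsto (fun i ↦ ((N : ℂ) ^ 2 * s i)⁻¹.re) l atTop := by
    convert! hs.const_mul_atTop hNsq using 2 with i
    rw [mul_inv, ← re_ofReal_mul]
    push_cast
    rfl
  have hclass (m : ℕ) := (tendsto_cpow_half_mul_tsum_gaussian hscaled ((m + x) / N)).const_mul
    (g m / N)
  have hlimit := tendsto_finsetSum (range N) fun m _ ↦ hclass m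
  simp only [mul_one, ← Finset.sum_div] at hlimit
  refine hlimit.congr' ?_
  filter_upwards [hs.eventually_gt_atTop 0] with i hi
  rw [tsum_periodic_mul_gaussian hg (re_pos_of_re_inv_pos hi), Finset.mul_sum]
  refine Finset.sum_congr rfl fun m _ ↦ ?_
  have hcpow : ((N : ℂ) ^ 2 * s i) ^ (1 / 2 : ℂ) = N * s i ^ (1 / 2 : ℂ) := by
    have hNre : 0 < (N : ℂ).re := by simpa using NeZero.pos N
    have hNsqre : 0 < ((N : ℂ) ^ 2).re := by exact_mod_cast inv_pos.1 hNsq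
    rw [mul_cpow_of_re_pos hNsqre (re_pos_of_re_inv_pos hi).le, one_div,
      sq_cpow_two_inv hNre]
  rw [hcpow]
  push_cast
  field_simp

/-- The phase `exp (πi (a n² + c n) / N)` of a quadratic Gauss sum. The factor is `πi` rather than
`2πi`, so the phase is a function of `n` modulo `N` exactly when `a N + c` is even. -/
noncomputable def quadraticPhase (a c : ℤ) (N : ℕ) (n : ℤ) : ℂ :=
  cexp (π * I * (a * n ^ 2 + c * n) / N)

/-- The generalized quadratic Gauss sum `∑ n < N, exp (πi (a n² + c n) / N)`. -/
noncomputable def quadraticGaussSum (a c : ℤ) (N : ℕ) : ℂ :=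
  ∑ n ∈ range N, quadraticPhase a c N n

lemma quadraticPhase_periodic {a c : ℤ} {N : ℕ} [NeZero N] (h : Even (a * N + c)) :
    Function.Periodic (quadraticPhase a c N) N := by
  intro n
  obtain ⟨r, hr⟩ := h
  have hN : (N : ℂ) ≠ 0 := NeZero.ne _
  have hr' : (a * N + c : ℂ) = r + r := by exact_mod_cast hr
  have hphase : π * I * (a * ((n + N : ℤ) : ℂ) ^ 2 + c * (n + N : ℤ)) / N =
      π * I * (a * n ^ 2 + c * n) / N + ((a * n + r : ℤ) : ℂ) * (2 * π * I) := by
    push_cast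
    field_simp
    linear_combination (N : ℂ) * hr'
  rw [quadraticPhase, hphase, Complex.exp_add, exp_int_mul_two_pi_mul_I, mul_one, quadraticPhase]

lemma quadraticPhase_mul_gaussian (a c : ℤ) (N : ℕ) (n : ℤ) (s : ℂ) :
    quadraticPhase a c N n * cexp (-π * s * n ^ 2) =
      cexp (-π * (s - I * (a / N)) * n ^ 2 + 2 * π * (I * c / (2 * N)) * n) := by
  rw [quadraticPhase, ← Complex.exp_add]
  ring_nf

lemma quadraticPhase_neg_mul_gaussian (a b : ℕ) [NeZero b] (c n : ℤ) (s : ℂ) :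
    cexp (-(π * I * c ^ 2 / (4 * a * b))) *
        (quadraticPhase (-b) c a n * cexp (-π * s * (n + -(c / (2 * b))) ^ 2)) =
      cexp (-π * (s + I * (b / a)) * (n + -(c / (2 * b))) ^ 2) := by
  have hb : (b : ℂ) ≠ 0 := NeZero.ne _
  rw [quadraticPhase, ← Complex.exp_add, ← Complex.exp_add]
  congr 1
  push_cast
  field_simp
  ring

lemma cpow_half_mul_tsum_quadraticPhase_mul_gaussian {a b : ℕ} [NeZero a] [NeZero b] {s s' : ℂ}
    (hs : 0 < s.re) (hs' : 0 < s'.re)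
    (h : s' * (s - I * (a / b)) = s * (((b / a : ℝ) : ℂ) * -I)) (c : ℤ) :
    s ^ (1 / 2 : ℂ) * ∑' n : ℤ, quadraticPhase a c b n * cexp (-π * s * n ^ 2) =
      cexp (-(π * I * c ^ 2 / (4 * a * b))) / (((b / a : ℝ) : ℂ) * -I) ^ (1 / 2 : ℂ) *
        (s' ^ (1 / 2 : ℂ) *
          ∑' n : ℤ, quadraticPhase (-b) c a n * cexp (-π * s' * (n + -(c / (2 * b))) ^ 2)) := by
  have ha : (a : ℂ) ≠ 0 := NeZero.ne _
  have hb : (b : ℂ) ≠ 0 := NeZero.ne _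
  have hαre : 0 < (s - I * (a / b)).re := by
    have him : ((a : ℂ) / b).im = 0 := by exact_mod_cast ofReal_im (a / b)
    simpa [him] using hs
  have hinv : 1 / (s - I * (a / b)) = s' + I * (b / a) := by
    rw [eq_comm, eq_div_iff (ne_zero_of_re_pos hαre), add_mul, h]
    push_cast
    field_simp
    linear_combination -(a : ℂ) * I_sq
  have hα : (s - I * (a / b)) ^ (1 / 2 : ℂ) ≠ 0 :=
    (cpow_ne_zero_iff_of_exponent_ne_zero (by simp)).2 (ne_zero_of_re_pos hαre)
  have hκ : (((b / a : ℝ) : ℂ) * -I) ^ (1 / 2 : ℂ) ≠ 0 :=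
    (cpow_ne_zero_iff_of_exponent_ne_zero (by simp)).2 (by simp [ha, hb])
  have hcpow : s ^ (1 / 2 : ℂ) / (s - I * (a / b)) ^ (1 / 2 : ℂ) =
      s' ^ (1 / 2 : ℂ) / (((b / a : ℝ) : ℂ) * -I) ^ (1 / 2 : ℂ) := by
    rw [div_eq_div_iff hα hκ, ← mul_cpow_of_re_pos hs (by simp), ← mul_cpow_of_re_pos hs' hαre.le,
      h]
  have hshift : I * (I * c / (2 * b)) = -(c / (2 * b)) := by
    linear_combination (c / (2 * b)) * I_sq
  have hdual (n : ℤ) : cexp (-π / (s - I * (a / b)) * (n + I * (I * c / (2 * b))) ^ 2) =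
      cexp (-(π * I * c ^ 2 / (4 * a * b))) *
        (quadraticPhase (-b) c a n * cexp (-π * s' * (n + -(c / (2 * b))) ^ 2)) := by
    rw [quadraticPhase_neg_mul_gaussian, ← hinv, hshift, mul_one_div]
  simp_rw [quadraticPhase_mul_gaussian, Int.cast_natCast, Complex.tsum_exp_neg_quadratic hαre,
    hdual, tsum_mul_left]
  linear_combination (cexp (-(π * I * c ^ 2 / (4 * a * b))) *
    ∑' n : ℤ, quadraticPhase (-b) c a n * cexp (-π * s' * (n + -(c / (2 * b))) ^ 2)) * hcpow

lemma quadraticGaussSum_div_eq (a b : ℕ) [NeZero a] [NeZero b] {c : ℤ}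
    (h : Even (a * b + c : ℤ)) :
    quadraticGaussSum a c b / b =
      cexp (-(π * I * c ^ 2 / (4 * a * b))) / (((b / a : ℝ) : ℂ) * -I) ^ (1 / 2 : ℂ) *
        (quadraticGaussSum (-b) c a / a) := by
  have ha : (0 : ℝ) < a := by exact_mod_cast NeZero.pos a
  have hb : (0 : ℝ) < b := by exact_mod_cast NeZero.pos b
  let s (T : ℝ) : ℂ := (T : ℂ)⁻¹
  let s' (T : ℝ) : ℂ := (((a / b) ^ 2 * T : ℝ) + I * (a / b : ℝ))⁻¹
  have hsinv (T : ℝ) : (s T)⁻¹.re = T := by simp [s]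
  have hsinv' (T : ℝ) : (s' T)⁻¹.re = (a / b : ℝ) ^ 2 * T := by
    rw [inv_inv, add_re, ofReal_re, I_mul_re, ofReal_im, neg_zero, add_zero]
  have hs : Tendsto (fun T ↦ (s T)⁻¹.re) atTop atTop := by simpa only [hsinv] using! tendsto_id
  have hs' : Tendsto (fun T ↦ (s' T)⁻¹.re) atTop atTop := by
    simpa only [hsinv'] using! tendsto_id.const_mul_atTop (by positivity)
  have hperiod' : Function.Periodic (quadraticPhase (-b) c a) a :=
    quadraticPhase_periodic (by convert! h.sub (even_two_mul (a * b : ℤ)) using 1; ring)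
  have hlim := tendsto_cpow_half_mul_tsum_periodic_mul_gaussian hs (quadraticPhase_periodic h) 0
  have hlim' := tendsto_cpow_half_mul_tsum_periodic_mul_gaussian hs' hperiod' (-(c / (2 * b)))
  refine tendsto_nhds_unique_of_eventuallyEq hlim (hlim'.const_mul _) ?_
  filter_upwards [eventually_gt_atTop 0] with T hT
  have hsT : 0 < (s T).re := re_pos_of_re_inv_pos (by rwa [hsinv])
  have hsT' : 0 < (s' T).re := re_pos_of_re_inv_pos (by rw [hsinv']; positivity)
  have hdual : s' T * (s T - I * (a / b)) = s T * (((b / a : ℝ) : ℂ) * -I) := by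
    have ha₀ : (a : ℂ) ≠ 0 := NeZero.ne _
    have hb₀ : (b : ℂ) ≠ 0 := NeZero.ne _
    have hT₀ : (T : ℂ) ≠ 0 := ofReal_ne_zero.2 hT.ne'
    rw [inv_mul_eq_iff_eq_mul₀ fun h₀ ↦ ne_zero_of_re_pos hsT' (inv_eq_zero.2 h₀)]
    push_cast
    simp only [s]
    field_simp
    linear_combination (b : ℂ) * I_sq
  push_cast
  simpa using cpow_half_mul_tsum_quadraticPhase_mul_gaussian hsT hsT' hdual c

/-- The generalized Landsberg–Schaar identity; `c = 0` is the classical one. -/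
theorem quadraticGaussSum_reciprocity (a b : ℕ) [NeZero a] [NeZero b] {c : ℤ}
    (h : Even (a * b + c : ℤ)) :
    quadraticGaussSum a c b =
      √(b / a) * cexp (π * I * (1 / 4 - c ^ 2 / (4 * a * b))) * quadraticGaussSum (-b) c a := by
  have hb : (b : ℂ) ≠ 0 := NeZero.ne _
  have hratio : (0 : ℝ) < b / a :=
    div_pos (by exact_mod_cast NeZero.pos b) (by exact_mod_cast NeZero.pos a)
  have hsqrt₀ : (√(b / a) : ℂ) ≠ 0 := ofReal_ne_zero.2 (Real.sqrt_pos.2 hratio).ne'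
  have hsqrt : (√(b / a) : ℂ) ^ 2 = b / a := by
    rw [← ofReal_pow, Real.sq_sqrt hratio.le]
    push_cast
    rfl
  have hexp : cexp (π * I * (1 / 4 - c ^ 2 / (4 * a * b))) =
      cexp (-(π * I * c ^ 2 / (4 * a * b))) / cexp (-(π / 4 * I)) := by
    rw [← Complex.exp_sub]
    ring_nf
  have hmean := quadraticGaussSum_div_eq a b h
  rw [ofReal_mul_neg_I_cpow_half hratio, div_eq_iff hb] at hmean
  rw [hmean, hexp, mul_div_assoc']
  field_simp
  rw [hsqrt]
  field_simp

lemma quadraticPhase_one_self (N : ℕ) [NeZero N] (n : ℕ) :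
    quadraticPhase 1 N N n = ((-1) ^ n : ℝ) * cexp ((π * n ^ 2 / N : ℝ) * I) := by
  have hN : (N : ℂ) ≠ 0 := NeZero.ne _
  push_cast
  rw [← exp_pi_mul_I, ← Complex.exp_nat_mul, ← Complex.exp_add, quadraticPhase]
  congr 1
  push_cast
  field_simp
  ring

lemma quadraticGaussSum_one_self (N : ℕ) [NeZero N] :
    quadraticGaussSum 1 N N = √N * cexp ((π * (1 - N) / 4 : ℝ) * I) := by
  have hrec := quadraticGaussSum_reciprocity 1 N (c := N) (by simp [← two_mul])
  have hone : quadraticGaussSum (-N) N 1 = 1 := by simp [quadraticGaussSum, quadraticPhase]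
  rw [hone, mul_one, Nat.cast_one, Nat.cast_one, div_one] at hrec
  rw [hrec]
  congr 2
  push_cast
  field_simp

end Reciprocity

lemma sum_range_neg_one_pow_mul_cos (N : ℕ) [NeZero N] :
    ∑ n ∈ range N, (-1 : ℝ) ^ n * Real.cos (π * n ^ 2 / N) =
      √N * Real.cos (π * (1 - N) / 4) := by
  have hre := congrArg Complex.re (quadraticGaussSum_one_self N)
  simpa only [quadraticGaussSum, quadraticPhase_one_self, Complex.re_sum, Complex.re_ofReal_mul,
    Complex.exp_ofReal_mul_I_re] using hre

lemma sum_range_four_mul_neg_one_pow_mul_cos (k : ℕ) [NeZero k] :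
    ∑ n ∈ range (4 * k), (-1 : ℝ) ^ n * Real.cos (π * n ^ 2 / (4 * k)) = √(2 * k) * (-1) ^ k := by
  have hsum := sum_range_neg_one_pow_mul_cos (4 * k)
  have hangle : π * (1 - 4 * k) / 4 = π / 4 - k * π := by ring
  have hsqrt : √(4 * k) * (√2 / 2) = √(2 * k) := by
    rw [show (4 * k : ℝ) = 2 * (2 * k) by ring, Real.sqrt_mul zero_le_two]
    linear_combination √(2 * k) / 2 * Real.mul_self_sqrt (zero_le_two (α := ℝ))
  push_cast at hsum
  rw [hsum, hangle, Real.cos_sub_nat_mul_pi, Real.cos_pi_div_four, ← hsqrt]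
  ring

lemma neg_one_pow_mul_cos_reflect {N n : ℕ} [NeZero N] (hn : n ≤ N) :
    (-1 : ℝ) ^ (N - n) * Real.cos (π * (N - n : ℕ) ^ 2 / N) =
      (-1) ^ n * Real.cos (π * n ^ 2 / N) := by
  have hN : (N : ℝ) ≠ 0 := NeZero.ne _
  obtain ⟨m, rfl⟩ := Nat.exists_eq_add_of_le' hn
  have hangle : π * m ^ 2 / (m + n : ℕ) + n * π = π * n ^ 2 / (m + n : ℕ) + m * π := by
    push_cast at hN ⊢
    field_simp
    ring
  have hcos := congrArg Real.cos hangle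
  rw [Real.cos_add_nat_mul_pi, Real.cos_add_nat_mul_pi] at hcos
  have hsq (j : ℕ) : ((-1 : ℝ) ^ j) ^ 2 = 1 := by rw [pow_right_comm, neg_one_sq, one_pow]
  rw [Nat.add_sub_cancel]
  linear_combination (-1) ^ m * (-1) ^ n * hcos -
    (-1) ^ m * Real.cos (π * m ^ 2 / (m + n : ℕ)) * hsq n +
    (-1) ^ n * Real.cos (π * n ^ 2 / (m + n : ℕ)) * hsq m

lemma sum_range_two_mul_add_of_reflect {M : Type*} [AddCommMonoid M] {f : ℕ → M} {m : ℕ}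
    (hf : ∀ n ∈ Icc 1 m, f (2 * m - n) = f n) :
    ∑ n ∈ range (2 * m), f n + f m = 2 • ∑ n ∈ Icc 1 m, f n + f 0 := by
  have hIcc : ∑ n ∈ Icc 1 m, f n = ∑ n ∈ range m, f (n + 1) := by
    rw [range_eq_Ico, sum_Ico_add' f 0 m 1]
    rfl
  have hfirst : ∑ n ∈ range m, f n + f m = ∑ n ∈ range m, f (n + 1) + f 0 := by
    rw [← sum_range_succ, sum_range_succ']
  have hsecond : ∑ n ∈ range m, f (m + n) = ∑ n ∈ range m, f (n + 1) := by
    rw [← sum_range_reflect]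
    refine sum_congr rfl fun n hn ↦ ?_
    have hnm := mem_range.1 hn
    rw [← hf (n + 1) (mem_Icc.2 ⟨by omega, hnm⟩)]
    congr 1
    omega
  rw [two_mul, sum_range_add, hsecond, hIcc, two_nsmul, add_right_comm, hfirst, add_right_comm]

theorem alternating_quadratic_cosine_sum_even (k : ℕ) (hk : 0 < k) :
    ∑ n ∈ Finset.Icc 1 (2 * k), (-1 : ℝ) ^ n * Real.cos (π * (n : ℝ) ^ 2 / (4 * k)) =
      (-1 + (-1 : ℝ) ^ k + Real.sqrt (2 * (k : ℝ)) * (-1 : ℝ) ^ k) / 2 := by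
  have : NeZero k := ⟨hk.ne'⟩
  let f (n : ℕ) : ℝ := (-1) ^ n * Real.cos (π * n ^ 2 / (4 * k))
  have hfull : ∑ n ∈ range (2 * (2 * k)), f n = √(2 * k) * (-1) ^ k := by
    rw [← sum_range_four_mul_neg_one_pow_mul_cos, ← mul_assoc]
    rfl
  have hreflect (n : ℕ) (hn : n ∈ Icc 1 (2 * k)) : f (2 * (2 * k) - n) = f n := by
    have hn' : n ≤ 4 * k := by grind
    simpa [f, ← mul_assoc] using neg_one_pow_mul_cos_reflect hn'
  have hzero : f 0 = 1 := by simp [f]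
  have hmid : f (2 * k) = (-1) ^ k := by
    have hangle : π * (2 * k : ℕ) ^ 2 / (4 * k) = k * π := by
      push_cast
      field_simp
      ring
    simp only [f, hangle, Real.cos_nat_mul_pi, pow_mul, neg_one_sq, one_pow, one_mul]
  have hhalf := sum_range_two_mul_add_of_reflect hreflect
  rw [hfull, hmid, hzero, nsmul_eq_mul] at hhalf
  push_cast at hhalf
  linarith
end

section
/- For every positive integer k, the symmetric alternating cosine sum satisfies ∑_{n=-2k}^{2k} (-1)^n * cos(π n² / (4k+1)) = (-1)^k * √(4k+1). -/
open Finset Real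

/-!
Following Gauss, evaluate `∑ ζ ^ n ^ 2` at a primitive root of unity `ζ` of odd order `2 * m + 1`
by recognising `ζ ^ (j * (j + 1))` as the alternating Gaussian binomial coefficient
`(-1) ^ j * [2 * m, j]` at the parameter `ζ⁻²`. The alternating sum of a row of Gaussian binomial
coefficients is a value of a Rogers–Szegő polynomial, whose three-term recurrence degenerates at
`-1` and yields a product. At `ζ = -exp (π * I / (2 * m + 1))` its factors are
`-2 * I * sin ((2 * i + 1) * π / (2 * m + 1))`. The product of the positive numbers `2 * sin` here
squares to the product of `‖1 - ω‖` over all nontrivial `(2 * m + 1)`-st roots of unity `ω`, that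
is, to `2 * m + 1`, and the sign of the sum is carried by the power of `-I`.
-/

section CommMonoid

variable {M : Type*} [CommMonoid M]

lemma prod_range_pow_two_mul_add_one (a : M) (m : ℕ) :
    ∏ i ∈ range m, a ^ (2 * i + 1) = a ^ m ^ 2 := by
  induction m with
  | zero => simp
  | succ m ih => rw [prod_range_succ, ih, ← pow_add]; ring_nf

lemma prod_range_two_mul (f : ℕ → M) (m : ℕ) :
    ∏ i ∈ range (2 * m), f i =
      (∏ i ∈ range m, f (2 * i)) * ∏ i ∈ range m, f (2 * i + 1) := by
  induction m with
  | zero => simp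
  | succ m ih =>
    rw [mul_add_one, prod_range_succ, prod_range_succ, ih, prod_range_succ, prod_range_succ]
    ac_rfl

end CommMonoid

section CommSemiring

variable {R : Type*} [CommSemiring R]

/-- The Gaussian binomial coefficient `[n, k]_q`, defined by the `q`-Pascal rule so that it makes
sense at every `q`, roots of unity included. -/
def gaussBinom (q : R) : ℕ → ℕ → R
  | _, 0 => 1
  | 0, _ + 1 => 0
  | n + 1, k + 1 => gaussBinom q n k + q ^ (k + 1) * gaussBinom q n (k + 1)

@[simp]
lemma gaussBinom_zero_right (q : R) (n : ℕ) : gaussBinom q n 0 = 1 := by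
  cases n <;> rfl

lemma gaussBinom_succ_succ (q : R) (n k : ℕ) :
    gaussBinom q (n + 1) (k + 1) =
      gaussBinom q n k + q ^ (k + 1) * gaussBinom q n (k + 1) :=
  rfl

lemma gaussBinom_eq_zero_of_lt (q : R) {n k : ℕ} (h : n < k) : gaussBinom q n k = 0 := by
  induction n generalizing k with
  | zero => obtain ⟨k, rfl⟩ := Nat.exists_eq_succ_of_ne_zero h.ne'; rfl
  | succ n ih =>
    obtain ⟨k, rfl⟩ := Nat.exists_eq_succ_of_ne_zero (Nat.ne_zero_of_lt h)
    rw [Nat.succ_eq_add_one, gaussBinom_succ_succ, ih (by omega), ih (by omega), mul_zero,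
      add_zero]

/-- The value at `x` of the Rogers–Szegő polynomial `∑ₖ [n, k]_q xᵏ`, the generating function of
a row of Gaussian binomial coefficients. -/
def rogersSzego (q : R) (n : ℕ) (x : R) : R :=
  ∑ k ∈ range (n + 1), gaussBinom q n k * x ^ k

lemma rogersSzego_succ (q : R) (n : ℕ) (x : R) :
    rogersSzego q (n + 1) x = x * rogersSzego q n x + rogersSzego q n (q * x) := by
  have extend : rogersSzego q n (q * x) =
      ∑ k ∈ range (n + 2), gaussBinom q n k * (q * x) ^ k := by
    rw [sum_range_succ _ (n + 1), gaussBinom_eq_zero_of_lt q n.lt_succ_self, zero_mul, add_zero,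
      rogersSzego]
  rw [extend, sum_range_succ', rogersSzego, sum_range_succ', rogersSzego, mul_sum, ← add_assoc,
    ← sum_add_distrib]
  congr 1
  · refine sum_congr rfl fun k _ => ?_
    rw [gaussBinom_succ_succ]
    ring
  · simp

end CommSemiring

section CommRing

variable {R : Type*} [CommRing R]

lemma one_sub_pow_mul_gaussBinom_succ_succ (q : R) (n k : ℕ) :
    (1 - q ^ (k + 1)) * gaussBinom q (n + 1) (k + 1) =
      (1 - q ^ (n + 1)) * gaussBinom q n k := by
  induction n generalizing k with
  | zero =>
    cases k with
    | zero => simp [gaussBinom_succ_succ, gaussBinom_eq_zero_of_lt]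
    | succ k => simp [gaussBinom_eq_zero_of_lt]
  | succ n ih =>
    cases k with
    | zero =>
      rw [gaussBinom_succ_succ, gaussBinom_zero_right]
      linear_combination q * ih 0 + q * (1 - q ^ (n + 1)) * gaussBinom_zero_right q n
    | succ k =>
      rw [gaussBinom_succ_succ q (n + 1) (k + 1)]
      linear_combination q ^ (k + 2) * ih (k + 1) + q * ih k
        - q * (1 - q ^ (n + 1)) * gaussBinom_succ_succ q n k

lemma rogersSzego_succ_mul (q : R) (n : ℕ) (x : R) :
    rogersSzego q (n + 1) (q * x) =
      rogersSzego q (n + 1) x - (1 - q ^ (n + 1)) * x * rogersSzego q n x := by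
  have difference : rogersSzego q (n + 1) x - rogersSzego q (n + 1) (q * x) =
      (1 - q ^ (n + 1)) * x * rogersSzego q n x := by
    rw [rogersSzego, rogersSzego, ← sum_sub_distrib, sum_range_succ', rogersSzego, mul_sum]
    simp only [pow_zero, sub_self, add_zero]
    refine sum_congr rfl fun k _ => ?_
    linear_combination x ^ (k + 1) * one_sub_pow_mul_gaussBinom_succ_succ q n k
  rw [← difference, sub_sub_cancel]

lemma rogersSzego_add_two (q : R) (n : ℕ) (x : R) :
    rogersSzego q (n + 2) x =
      (1 + x) * rogersSzego q (n + 1) x - (1 - q ^ (n + 1)) * x * rogersSzego q n x := by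
  rw [rogersSzego_succ, rogersSzego_succ_mul]
  ring

lemma rogersSzego_two_mul_neg_one (q : R) (m : ℕ) :
    rogersSzego q (2 * m) (-1) = ∏ i ∈ range m, (1 - q ^ (2 * i + 1)) := by
  induction m with
  | zero => simp [rogersSzego]
  | succ m ih =>
    rw [prod_range_succ, ← ih, mul_add_one, rogersSzego_add_two]
    ring

variable [IsDomain R]

lemma gaussBinom_eq_zero_of_isPrimitiveRoot {q : R} {n k : ℕ} (hq : IsPrimitiveRoot q (n + 1))
    (hk : k < n) : gaussBinom q (n + 1) (k + 1) = 0 := by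
  have absorb := one_sub_pow_mul_gaussBinom_succ_succ q n k
  rw [hq.pow_eq_one, sub_self, zero_mul] at absorb
  exact (mul_eq_zero.mp absorb).resolve_left <| sub_ne_zero.mpr <|
    (hq.pow_ne_one_of_pos_of_lt k.succ_ne_zero (by omega)).symm

lemma neg_one_pow_mul_gaussBinom_of_isPrimitiveRoot {g q : R} {n k : ℕ}
    (hq : IsPrimitiveRoot q (n + 1)) (hgq : g ^ 2 * q = 1) (hk : k ≤ n) :
    (-1) ^ k * gaussBinom q n k = g ^ (k * (k + 1)) := by
  induction k with
  | zero => simp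
  | succ k ih =>
    have pascal : gaussBinom q n k + q ^ (k + 1) * gaussBinom q n (k + 1) = 0 := by
      rw [← gaussBinom_succ_succ, gaussBinom_eq_zero_of_isPrimitiveRoot hq hk]
    have cancel : g ^ (2 * (k + 1)) * q ^ (k + 1) = 1 := by
      rw [pow_mul, ← mul_pow, hgq, one_pow]
    rw [show (k + 1) * (k + 1 + 1) = k * (k + 1) + 2 * (k + 1) by ring, pow_add g,
      ← ih (Nat.le_of_succ_le hk)]
    linear_combination (-1) ^ (k + 1) * g ^ (2 * (k + 1)) * pascal
      - (-1) ^ (k + 1) * gaussBinom q n (k + 1) * cancel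

end CommRing

section DivisionRing

variable {K : Type*} [DivisionRing K]

lemma neg_one_zpow_sq (n : ℤ) : (-1 : K) ^ (n ^ 2) = (-1) ^ n := by
  rcases n.even_or_odd with hn | hn
  · rw [hn.neg_one_zpow, (hn.pow_of_ne_zero two_ne_zero).neg_one_zpow]
  · rw [hn.neg_one_zpow, hn.pow.neg_one_zpow]

lemma sum_Icc_zpow_sq {ζ : K} {m : ℕ} (hζ : ζ ^ (2 * m + 1) = 1) :
    ∑ n ∈ Icc (-(m : ℤ)) m, ζ ^ (n ^ 2) =
      ζ ^ m ^ 2 * ∑ j ∈ range (2 * m + 1), ζ ^ (j * (j + 1)) := by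
  have hζ0 : ζ ≠ 0 := by rintro rfl; simp at hζ
  rw [Int.Icc_eq_finset_map, sum_map, mul_sum, show ((m : ℤ) + 1 - -m).toNat = 2 * m + 1 by omega]
  refine sum_congr rfl fun j _ => ?_
  have expand : (-(m : ℤ) + j) ^ 2 =
      (m ^ 2 + j * (j + 1) : ℕ) + (2 * m + 1 : ℕ) * -(j : ℤ) := by
    push_cast
    ring
  simp only [Function.Embedding.trans_apply, Nat.castEmbedding_apply, addLeftEmbedding_apply]
  rw [expand, zpow_add₀ hζ0, zpow_mul, zpow_natCast, zpow_natCast, hζ, one_zpow, mul_one, pow_add]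

end DivisionRing

section RootsOfUnity

variable {K : Type*} [Field K]

lemma sum_pow_mul_succ_eq_prod_of_isPrimitiveRoot {ζ : K} {m : ℕ}
    (hζ : IsPrimitiveRoot ζ (2 * m + 1)) :
    ∑ j ∈ range (2 * m + 1), ζ ^ (j * (j + 1)) =
      ∏ i ∈ range m, (1 - (ζ ^ 2)⁻¹ ^ (2 * i + 1)) := by
  have primitive_inv_sq : IsPrimitiveRoot (ζ ^ 2)⁻¹ (2 * m + 1) :=
    (hζ.pow_of_coprime 2 (by simp)).inv
  have sq_mul_inv : ζ ^ 2 * (ζ ^ 2)⁻¹ = 1 :=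
    mul_inv_cancel₀ (pow_ne_zero 2 (hζ.ne_zero (Nat.succ_ne_zero _)))
  rw [← rogersSzego_two_mul_neg_one, rogersSzego]
  refine sum_congr rfl fun j hj => ?_
  rw [mul_comm (gaussBinom _ _ _), neg_one_pow_mul_gaussBinom_of_isPrimitiveRoot primitive_inv_sq
    sq_mul_inv (mem_range_succ_iff.mp hj)]

theorem sum_zpow_sq_eq_prod_of_isPrimitiveRoot {ζ : K} {m : ℕ}
    (hζ : IsPrimitiveRoot ζ (2 * m + 1)) :
    ∑ n ∈ Icc (-(m : ℤ)) m, ζ ^ (n ^ 2) =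
      ∏ i ∈ range m, (ζ ^ (2 * i + 1) - (ζ ^ (2 * i + 1))⁻¹) := by
  have hζ0 : ζ ≠ 0 := hζ.ne_zero (Nat.succ_ne_zero _)
  rw [sum_Icc_zpow_sq hζ.pow_eq_one, sum_pow_mul_succ_eq_prod_of_isPrimitiveRoot hζ,
    ← prod_range_pow_two_mul_add_one, ← prod_mul_distrib]
  refine prod_congr rfl fun i _ => ?_
  have hpow : ζ ^ (2 * i + 1) ≠ 0 := pow_ne_zero _ hζ0
  rw [inv_pow, pow_right_comm]
  field_simp

end RootsOfUnity

section Sine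

lemma norm_one_sub_exp_two_pi_mul_I_pow (n i : ℕ) :
    ‖1 - Complex.exp (2 * π * Complex.I / n) ^ i‖ = |2 * sin (i * π / n)| := by
  have angle : (i : ℂ) * (2 * π * Complex.I / n) =
      Complex.I * ((2 * (i * π / n) : ℝ) : ℂ) := by
    push_cast
    ring
  rw [norm_sub_rev, ← Complex.exp_nat_mul, angle, Complex.norm_exp_I_mul_ofReal_sub_one,
    mul_div_cancel_left₀ _ two_ne_zero, norm_eq_abs]

lemma sin_natCast_mul_pi_div_pos {i n : ℕ} (hi : 0 < i) (hin : i < n) :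
    0 < sin (i * π / n) := by
  have hn : (0 : ℝ) < n := by exact_mod_cast hi.trans hin
  refine sin_pos_of_pos_of_lt_pi (by positivity) ?_
  rw [div_lt_iff₀ hn, mul_comm]
  gcongr

lemma prod_two_mul_sin (n : ℕ) :
    ∏ i ∈ range n, 2 * sin ((i + 1 : ℕ) * π / (n + 1 : ℕ)) = (n + 1 : ℕ) := by
  have norm_eq := congrArg norm
    (Complex.isPrimitiveRoot_exp (n + 1) n.succ_ne_zero).prod_one_sub_pow_eq_order
  rw [norm_prod, ← Nat.cast_succ, Complex.norm_natCast] at norm_eq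
  refine (prod_congr rfl fun i hi => ?_).trans norm_eq
  have sin_pos := sin_natCast_mul_pi_div_pos i.succ_pos (Nat.succ_lt_succ (mem_range.mp hi))
  rw [norm_one_sub_exp_two_pi_mul_I_pow, abs_of_pos (by positivity)]

lemma prod_two_mul_sin_odd (m : ℕ) :
    ∏ i ∈ range m, 2 * sin ((2 * i + 1 : ℕ) * π / (2 * m + 1 : ℕ)) = √(2 * m + 1) := by
  have even_eq_odd : ∏ i ∈ range m, 2 * sin ((2 * i + 1 + 1 : ℕ) * π / (2 * m + 1 : ℕ)) =
      ∏ i ∈ range m, 2 * sin ((2 * i + 1 : ℕ) * π / (2 * m + 1 : ℕ)) := by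
    rw [← prod_range_reflect]
    refine prod_congr rfl fun i hi => ?_
    have index : 2 * (m - 1 - i) + 1 + 1 + (2 * i + 1) = 2 * m + 1 := by
      have := mem_range.mp hi
      omega
    rw [← sin_pi_sub, ← index]
    congr 2
    push_cast
    field_simp
    ring
  have nonneg : 0 ≤ ∏ i ∈ range m, 2 * sin ((2 * i + 1 : ℕ) * π / (2 * m + 1 : ℕ)) := by
    refine prod_nonneg fun i hi => ?_
    have index_lt : 2 * i + 1 < 2 * m + 1 := by
      have := mem_range.mp hi
      omega
    have sin_pos := sin_natCast_mul_pi_div_pos (2 * i).succ_pos index_lt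
    positivity
  have sq_eq := prod_two_mul_sin (2 * m)
  rw [prod_range_two_mul, even_eq_odd] at sq_eq
  rw [eq_comm, sqrt_eq_iff_mul_self_eq (by positivity) nonneg, sq_eq]
  push_cast
  rfl

end Sine

section GaussSum

lemma isPrimitiveRoot_neg_exp_pi_mul_I_div (m : ℕ) :
    IsPrimitiveRoot (-Complex.exp (π * Complex.I / (2 * m + 1 : ℕ))) (2 * m + 1) := by
  have coprime : (m + 1).Coprime (2 * m + 1) :=
    Nat.isCoprime_iff_coprime.mp ⟨2, -1, by push_cast; ring⟩
  convert Complex.isPrimitiveRoot_exp_of_coprime (m + 1) (2 * m + 1) (by omega) coprime using 1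
  have hN : ((2 * m + 1 : ℕ) : ℂ) ≠ 0 := by exact_mod_cast Nat.succ_ne_zero (2 * m)
  rw [← neg_one_mul, ← Complex.exp_pi_mul_I, ← Complex.exp_add]
  congr 1
  field_simp
  push_cast
  ring

lemma exp_mul_I_sub_inv (x : ℂ) :
    Complex.exp (x * Complex.I) - (Complex.exp (x * Complex.I))⁻¹ =
      2 * Complex.I * Complex.sin x := by
  rw [← Complex.exp_neg, ← neg_mul, mul_right_comm, Complex.two_sin, mul_assoc, Complex.I_mul_I]
  ring

theorem sum_neg_one_zpow_mul_exp (m : ℕ) :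
    ∑ n ∈ Icc (-(m : ℤ)) m, (-1) ^ n * Complex.exp ((π * n ^ 2 / (2 * m + 1) : ℝ) * Complex.I) =
      (-Complex.I) ^ m * √(2 * m + 1) := by
  set ζ := -Complex.exp (π * Complex.I / (2 * m + 1 : ℕ)) with hζ
  have term_eq (n : ℤ) :
      (-1) ^ n * Complex.exp ((π * n ^ 2 / (2 * m + 1) : ℝ) * Complex.I) = ζ ^ (n ^ 2) := by
    rw [hζ, ← neg_one_mul (Complex.exp _), mul_zpow, neg_one_zpow_sq, ← Complex.exp_int_mul]
    push_cast
    ring_nf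
  have factor_eq (i : ℕ) : ζ ^ (2 * i + 1) - (ζ ^ (2 * i + 1))⁻¹ =
      -Complex.I * (2 * sin ((2 * i + 1 : ℕ) * π / (2 * m + 1 : ℕ)) : ℝ) := by
    have angle : ((2 * i + 1 : ℕ) : ℂ) * (π * Complex.I / (2 * m + 1 : ℕ)) =
        ((2 * i + 1 : ℕ) * π / (2 * m + 1 : ℕ) : ℝ) * Complex.I := by
      push_cast
      ring
    rw [hζ, (odd_two_mul_add_one i).neg_pow, ← Complex.exp_nat_mul, angle, inv_neg,
      Complex.ofReal_mul, Complex.ofReal_sin, Complex.ofReal_ofNat]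
    linear_combination -exp_mul_I_sub_inv ((2 * i + 1 : ℕ) * π / (2 * m + 1 : ℕ) : ℝ)
  rw [sum_congr rfl fun n _ => term_eq n,
    sum_zpow_sq_eq_prod_of_isPrimitiveRoot (isPrimitiveRoot_neg_exp_pi_mul_I_div m),
    prod_congr rfl fun i _ => factor_eq i, prod_mul_distrib, prod_const, card_range,
    ← Complex.ofReal_prod, prod_two_mul_sin_odd]

end GaussSum

theorem symmetric_alternating_cosine_sum_general (m : ℕ) :
    ∑ n ∈ Icc (-(m : ℤ)) m, (-1 : ℝ) ^ n * cos (π * n ^ 2 / (2 * m + 1)) =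
      cos (m * π / 2) * √(2 * m + 1) := by
  have neg_I_pow : (-Complex.I) ^ m = Complex.exp ((-(m * π / 2) : ℝ) * Complex.I) := by
    rw [← Complex.exp_neg_pi_div_two_mul_I, ← Complex.exp_nat_mul]
    push_cast
    ring_nf
  have re_eq := congrArg Complex.re (sum_neg_one_zpow_mul_exp m)
  rw [neg_I_pow, Complex.re_mul_ofReal, Complex.exp_ofReal_mul_I_re, cos_neg, Complex.re_sum]
    at re_eq
  rw [← re_eq]
  refine sum_congr rfl fun n _ => ?_
  rw [← Complex.exp_ofReal_mul_I_re, ← Complex.re_ofReal_mul]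
  push_cast
  rfl

theorem symmetric_alternating_cosine_sum (k : ℕ) (hk : 0 < k) :
    ∑ n ∈ Finset.Icc (-(2 * (k : ℤ))) (2 * (k : ℤ)), (-1 : ℝ) ^ n *
        Real.cos (π * (n : ℝ) ^ 2 / (4 * (k : ℝ) + 1)) =
      (-1 : ℝ) ^ k * Real.sqrt (4 * (k : ℝ) + 1) := by
  have double : (2 : ℝ) * (2 * k) = 4 * k := by ring
  simpa [double, mul_assoc, cos_nat_mul_pi] using symmetric_alternating_cosine_sum_general (2 * k)
end
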